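/- Let X = [[A, B], [C, D]] be a block matrix with full column rank, and let H₁, H₂ be generic matrices (i.e., matrices whose entries are algebraically independent transcendentals, or drawn from a continuous distribution) independent of each other and of X, with compatible dimensions. Then rank([[H₁A, H₁B], [H₂C, H₂D]]) ≥ rank([[H₁A, 0], [0, H₂D]]) almost surely (equivalently, for generic H₁, H₂). -/

import Mathlib

/-!
Matrix rank is lower semicontinuous in the Zariski topology, so the generic rank of
`[H₁ * X₁; H₂ * X₂]` is at least its value at any single choice of `H₁, H₂`. Choosing `H₁, H₂`
amounts to choosing subspaces `W₁, W₂` of prescribed dimensions inside the row spaces of `X₁` and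
`X₂`, and dimensions `r₁ ≤ rank X₁`, `r₂ ≤ rank X₂` can be realised by independent `W₁, W₂` as soon
as `r₁ + r₂ ≤ rank [X₁; X₂]`. With `X₁ = [A, B]`, `X₂ = [C, D]`, and with `r₁, r₂` the largest
possible ranks of `H₁ * A`, `H₂ * D` (the number of rows of `Hᵢ`, capped by `rank A`, `rank D`),
this is the claim.
-/

open Matrix Module

section Subspaces

variable {K V : Type*} [DivisionRing K] [AddCommGroup V] [Module K V] [FiniteDimensional K V]

theorem exists_submodule_le_finrank_sup (U₁ U₂ : Submodule K V) {r₁ r₂ : ℕ}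
    (h₁ : r₁ ≤ finrank K U₁) (h₂ : r₂ ≤ finrank K U₂)
    (h : r₁ + r₂ ≤ finrank K ↥(U₁ ⊔ U₂)) :
    ∃ W ≤ U₁, finrank K W = r₁ ∧ r₁ + r₂ ≤ finrank K ↥(W ⊔ U₂) := by
  induction r₁ with
  | zero => exact ⟨⊥, bot_le, finrank_bot K V, by rwa [zero_add, bot_sup_eq]⟩
  | succ r ih =>
    obtain ⟨W, hWU, hW, hr⟩ := ih (by lia) (by lia)
    suffices ∃ u ∈ U₁, u ∉ W ∧ r + 1 + r₂ ≤ finrank K ↥((W ⊔ K ∙ u) ⊔ U₂) by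
      obtain ⟨u, huU, huW, hu⟩ := this
      refine ⟨W ⊔ K ∙ u, sup_le hWU ((Submodule.span_singleton_le_iff_mem u U₁).2 huU), ?_, hu⟩
      rw [Submodule.finrank_sup_span_singleton huW, hW]
    by_cases hlarge : r + 1 + r₂ ≤ finrank K ↥(W ⊔ U₂)
    · have hlt : W < U₁ := hWU.lt_of_ne (by rintro rfl; lia)
      obtain ⟨u, huU, huW⟩ := SetLike.exists_of_lt hlt
      exact ⟨u, huU, huW, hlarge.trans
        (Submodule.finrank_mono (sup_le_sup_right le_sup_left U₂))⟩
    · have hnot_le : ¬ U₁ ≤ W ⊔ U₂ := fun hle =>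
        hlarge (h.trans (Submodule.finrank_mono (sup_le hle le_sup_right)))
      obtain ⟨u, huU, hu⟩ := SetLike.not_le_iff_exists.1 hnot_le
      refine ⟨u, huU, fun huW => hu (Submodule.mem_sup_left huW), ?_⟩
      rw [sup_right_comm, Submodule.finrank_sup_span_singleton hu]
      lia

theorem exists_submodule_le_submodule_le_finrank_sup (U₁ U₂ : Submodule K V) {r₁ r₂ : ℕ}
    (h₁ : r₁ ≤ finrank K U₁) (h₂ : r₂ ≤ finrank K U₂)
    (h : r₁ + r₂ ≤ finrank K ↥(U₁ ⊔ U₂)) :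
    ∃ W₁ ≤ U₁, ∃ W₂ ≤ U₂, finrank K W₁ = r₁ ∧ finrank K W₂ = r₂ ∧
      r₁ + r₂ ≤ finrank K ↥(W₁ ⊔ W₂) := by
  obtain ⟨W₁, hWU₁, hW₁, hr₁⟩ := exists_submodule_le_finrank_sup U₁ U₂ h₁ h₂ h
  obtain ⟨W₂, hWU₂, hW₂, hr₂⟩ := exists_submodule_le_finrank_sup U₂ W₁ h₂ hW₁.ge
    (by rwa [add_comm, sup_comm])
  exact ⟨W₁, hWU₁, W₂, hWU₂, hW₁, hW₂, by rwa [add_comm, sup_comm]⟩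

theorem exists_span_range_eq_of_finrank_le_card {κ : Type*} [Fintype κ] (W : Submodule K V)
    (hW : finrank K W ≤ Fintype.card κ) :
    ∃ w : κ → V, Submodule.span K (Set.range w) = W := by
  obtain ⟨v, hvW, hv, -⟩ := Submodule.exists_fun_fin_finrank_span_eq K (W : Set V)
  obtain ⟨e⟩ : Nonempty (Fin (finrank K (Submodule.span K (W : Set V))) ↪ κ) :=
    Function.Embedding.nonempty_of_card_le (by rwa [Fintype.card_fin, Submodule.span_eq])
  refine ⟨Function.extend e v 0, le_antisymm (Submodule.span_le.2 ?_) ?_⟩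
  · rintro _ ⟨i, rfl⟩
    by_cases hi : ∃ j, e j = i
    · obtain ⟨j, rfl⟩ := hi
      rw [e.injective.extend_apply]
      exact hvW j
    · rw [Function.extend_apply' _ _ _ hi]
      exact W.zero_mem
  · calc W = Submodule.span K (W : Set V) := (Submodule.span_eq W).symm
      _ = Submodule.span K (Set.range v) := hv.symm
      _ ≤ Submodule.span K (Set.range (Function.extend e v 0)) :=
        Submodule.span_mono (Set.range_subset_iff.2 fun j => ⟨e j, e.injective.extend_apply v 0 j⟩)

end Subspaces

section MatrixRank

variable {K m m₁ m₂ n n₁ n₂ κ : Type*} [Field K]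

theorem rank_fromRows [Finite m₁] [Finite m₂] [Fintype n]
    (P : Matrix m₁ n K) (Q : Matrix m₂ n K) :
    (fromRows P Q).rank =
      finrank K ↥(Submodule.span K (Set.range P.row) ⊔ Submodule.span K (Set.range Q.row)) := by
  rw [rank_eq_finrank_span_row, ← Submodule.span_union]
  exact congrArg (fun s => finrank K (Submodule.span K s)) (Set.Sum.elim_range P.row Q.row)

theorem rank_fromRows_le [Finite m₁] [Finite m₂] [Fintype n]
    (P : Matrix m₁ n K) (Q : Matrix m₂ n K) : (fromRows P Q).rank ≤ P.rank + Q.rank := by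
  rw [rank_fromRows, rank_eq_finrank_span_row P, rank_eq_finrank_span_row Q]
  exact Submodule.finrank_add_le_finrank_add_finrank _ _

theorem rank_fromBlocks_zero_zero_le [Finite m₁] [Finite m₂] [Fintype n₁] [Fintype n₂]
    (P : Matrix m₁ n₁ K) (Q : Matrix m₂ n₂ K) :
    (fromBlocks P 0 0 Q).rank ≤ P.rank + Q.rank := by
  classical
  have hP : fromCols P (0 : Matrix m₁ n₂ K) = P * fromCols (1 : Matrix n₁ n₁ K) 0 := by
    rw [mul_fromCols, Matrix.mul_one, Matrix.mul_zero]
  have hQ : fromCols (0 : Matrix m₂ n₁ K) Q = Q * fromCols 0 (1 : Matrix n₂ n₂ K) := by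
    rw [mul_fromCols, Matrix.mul_one, Matrix.mul_zero]
  rw [← fromRows_fromCols_eq_fromBlocks, hP, hQ]
  exact (rank_fromRows_le _ _).trans (add_le_add (rank_mul_le_left _ _) (rank_mul_le_left _ _))

theorem exists_linearIndependent_row_submatrix [Finite m] [Fintype n] (M : Matrix m n K) {r : ℕ}
    (hr : M.rank = r) : ∃ f : Fin r → m, LinearIndependent K (M.submatrix f id).row := by
  rw [rank_eq_finrank_span_row] at hr
  subst hr
  obtain ⟨v, hv, -, hlin⟩ := Submodule.exists_fun_fin_finrank_span_eq K (Set.range M.row)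
  choose f hf using hv
  obtain rfl : (fun i => M.row (f i)) = v := funext hf
  exact ⟨f, hlin⟩

theorem exists_det_submatrix_ne_zero [Finite m] [Fintype n] (M : Matrix m n K) :
    ∃ (f : Fin M.rank → m) (g : Fin M.rank → n), (M.submatrix f g).det ≠ 0 := by
  obtain ⟨f, hf⟩ := exists_linearIndependent_row_submatrix M rfl
  obtain ⟨g, hg⟩ := exists_linearIndependent_row_submatrix (M.submatrix f id)ᵀ
    (by rw [rank_transpose, hf.rank_matrix, Fintype.card_fin])
  refine ⟨f, g, ?_⟩
  rw [← det_transpose, ← isUnit_iff_ne_zero, ← isUnit_iff_isUnit_det]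
  exact linearIndependent_rows_iff_isUnit.1 hg

theorem exists_span_range_row_mul_eq [Fintype m] [Finite n] [Fintype κ] (X : Matrix m n K)
    {W : Submodule K (n → K)} (hWX : W ≤ Submodule.span K (Set.range X.row))
    (hW : finrank K W ≤ Fintype.card κ) :
    ∃ H : Matrix κ m K, Submodule.span K (Set.range (H * X).row) = W := by
  obtain ⟨w, hw⟩ := exists_span_range_eq_of_finrank_le_card W hW
  have hmem (i : κ) : w i ∈ LinearMap.range X.vecMulLinear := by
    rw [range_vecMulLinear]
    exact hWX (hw ▸ Submodule.subset_span (Set.mem_range_self i))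
  choose H hH using hmem
  refine ⟨of H, ?_⟩
  rw [← hw]
  congr 2
  exact funext hH

theorem exists_le_rank_fromRows_mul {κ₁ κ₂ : Type*} [Fintype m₁] [Fintype m₂] [Fintype n]
    [Fintype κ₁] [Fintype κ₂] (X₁ : Matrix m₁ n K) (X₂ : Matrix m₂ n K) {r₁ r₂ : ℕ}
    (hκ₁ : r₁ ≤ Fintype.card κ₁) (hκ₂ : r₂ ≤ Fintype.card κ₂)
    (h₁ : r₁ ≤ X₁.rank) (h₂ : r₂ ≤ X₂.rank) (h : r₁ + r₂ ≤ (fromRows X₁ X₂).rank) :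
    ∃ (H₁ : Matrix κ₁ m₁ K) (H₂ : Matrix κ₂ m₂ K),
      r₁ + r₂ ≤ (fromRows (H₁ * X₁) (H₂ * X₂)).rank := by
  rw [rank_eq_finrank_span_row] at h₁ h₂
  rw [rank_fromRows] at h
  obtain ⟨W₁, hWX₁, W₂, hWX₂, hW₁, hW₂, hW⟩ :=
    exists_submodule_le_submodule_le_finrank_sup _ _ h₁ h₂ h
  obtain ⟨H₁, hH₁⟩ := exists_span_range_row_mul_eq X₁ hWX₁ (hW₁.trans_le hκ₁)
  obtain ⟨H₂, hH₂⟩ := exists_span_range_row_mul_eq X₂ hWX₂ (hW₂.trans_le hκ₂)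
  exact ⟨H₁, H₂, by rwa [rank_fromRows, hH₁, hH₂]⟩

end MatrixRank

section GenericRank

variable {K σ m n : Type*} [Field K]

theorem exists_mvPolynomial_rank_map_eval_le [Finite m] [Fintype n]
    (M : Matrix m n (MvPolynomial σ K)) (x₀ : σ → K) :
    ∃ p : MvPolynomial σ K, p ≠ 0 ∧ ∀ x, MvPolynomial.eval x p ≠ 0 →
      (M.map (MvPolynomial.eval x₀)).rank ≤ (M.map (MvPolynomial.eval x)).rank := by
  obtain ⟨f, g, hdet⟩ := exists_det_submatrix_ne_zero (M.map (MvPolynomial.eval x₀))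
  have eval_minor (x : σ → K) : MvPolynomial.eval x (M.submatrix f g).det =
      ((M.map (MvPolynomial.eval x)).submatrix f g).det := RingHom.map_det _ _
  refine ⟨(M.submatrix f g).det, fun hzero => hdet ?_, fun x hx => ?_⟩
  · rw [← eval_minor, hzero, map_zero]
  · rw [eval_minor] at hx
    have hrank := rank_of_det_ne_zero hx
    rw [Fintype.card_fin] at hrank
    exact hrank.symm.trans_le (rank_submatrix_le _ f g)

variable {m₁ m₂ κ₁ κ₂ : Type*} [Fintype m₁] [Fintype m₂] [Fintype n]

theorem exists_mvPolynomial_rank_fromRows_mul_le [Finite κ₁] [Finite κ₂]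
    (X₁ : Matrix m₁ n K) (X₂ : Matrix m₂ n K)
    (G₁ : Matrix κ₁ m₁ K) (G₂ : Matrix κ₂ m₂ K) :
    ∃ p : MvPolynomial ((κ₁ × m₁) ⊕ (κ₂ × m₂)) K, p ≠ 0 ∧
      ∀ (H₁ : Matrix κ₁ m₁ K) (H₂ : Matrix κ₂ m₂ K),
        MvPolynomial.eval (Sum.elim (fun q => H₁ q.1 q.2) (fun q => H₂ q.1 q.2)) p ≠ 0 →
        (fromRows (G₁ * X₁) (G₂ * X₂)).rank ≤ (fromRows (H₁ * X₁) (H₂ * X₂)).rank := by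
  let toPoly : K →+* MvPolynomial ((κ₁ × m₁) ⊕ (κ₂ × m₂)) K := MvPolynomial.C
  let Y₁ : Matrix κ₁ m₁ (MvPolynomial ((κ₁ × m₁) ⊕ (κ₂ × m₂)) K) :=
    of fun i j => MvPolynomial.X (Sum.inl (i, j))
  let Y₂ : Matrix κ₂ m₂ (MvPolynomial ((κ₁ × m₁) ⊕ (κ₂ × m₂)) K) :=
    of fun i j => MvPolynomial.X (Sum.inr (i, j))
  let M := fromRows (Y₁ * X₁.map toPoly) (Y₂ * X₂.map toPoly)
  have map_eval (H₁ : Matrix κ₁ m₁ K) (H₂ : Matrix κ₂ m₂ K) :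
      M.map (MvPolynomial.eval (Sum.elim (fun q => H₁ q.1 q.2) (fun q => H₂ q.1 q.2))) =
        fromRows (H₁ * X₁) (H₂ * X₂) := by
    ext (i | i) j <;>
      simp only [M, Y₁, Y₂, toPoly, map_apply, fromRows_apply_inl, fromRows_apply_inr,
        Matrix.mul_apply, of_apply, map_sum, map_mul, MvPolynomial.eval_X, MvPolynomial.eval_C,
        Sum.elim_inl, Sum.elim_inr]
  obtain ⟨p, hp, hrank⟩ := exists_mvPolynomial_rank_map_eval_le M
    (Sum.elim (fun q => G₁ q.1 q.2) (fun q => G₂ q.1 q.2))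
  refine ⟨p, hp, fun H₁ H₂ hH => ?_⟩
  simpa only [map_eval] using hrank _ hH

end GenericRank

theorem stmt_0_general {K m₁ m₂ n₁ n₂ κ₁ κ₂ : Type*} [Field K] [Fintype m₁] [Fintype m₂]
    [Fintype n₁] [Fintype n₂] [Fintype κ₁] [Fintype κ₂]
    (A : Matrix m₁ n₁ K) (B : Matrix m₁ n₂ K) (C : Matrix m₂ n₁ K) (D : Matrix m₂ n₂ K)
    (hX : min (Fintype.card κ₁) A.rank + min (Fintype.card κ₂) D.rank ≤
      (fromBlocks A B C D).rank) :
    ∃ p : MvPolynomial ((κ₁ × m₁) ⊕ (κ₂ × m₂)) K, p ≠ 0 ∧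
      ∀ (H₁ : Matrix κ₁ m₁ K) (H₂ : Matrix κ₂ m₂ K),
        MvPolynomial.eval (Sum.elim (fun q => H₁ q.1 q.2) (fun q => H₂ q.1 q.2)) p ≠ 0 →
        (fromBlocks (H₁ * A) 0 0 (H₂ * D)).rank ≤
          (fromBlocks (H₁ * A) (H₁ * B) (H₂ * C) (H₂ * D)).rank := by
  have hA : A.rank ≤ (fromCols A B).rank := rank_submatrix_le (fromCols A B) id Sum.inl
  have hD : D.rank ≤ (fromCols C D).rank := rank_submatrix_le (fromCols C D) id Sum.inr
  rw [← fromRows_fromCols_eq_fromBlocks] at hX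
  obtain ⟨G₁, G₂, hG⟩ := exists_le_rank_fromRows_mul (fromCols A B) (fromCols C D)
    (min_le_left _ _) (min_le_left _ _) (min_le_of_right_le hA) (min_le_of_right_le hD) hX
  obtain ⟨p, hp, hrank⟩ :=
    exists_mvPolynomial_rank_fromRows_mul_le (fromCols A B) (fromCols C D) G₁ G₂
  refine ⟨p, hp, fun H₁ H₂ hH => ?_⟩
  calc (fromBlocks (H₁ * A) 0 0 (H₂ * D)).rank
      ≤ (H₁ * A).rank + (H₂ * D).rank := rank_fromBlocks_zero_zero_le _ _
    _ ≤ min (Fintype.card κ₁) A.rank + min (Fintype.card κ₂) D.rank :=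
        add_le_add (le_min (rank_le_card_height _) (rank_mul_le_right _ _))
          (le_min (rank_le_card_height _) (rank_mul_le_right _ _))
    _ ≤ (fromRows (G₁ * fromCols A B) (G₂ * fromCols C D)).rank := hG
    _ ≤ (fromRows (H₁ * fromCols A B) (H₂ * fromCols C D)).rank := hrank H₁ H₂ hH
    _ = (fromBlocks (H₁ * A) (H₁ * B) (H₂ * C) (H₂ * D)).rank := by
        simp only [mul_fromCols, fromRows_fromCols_eq_fromBlocks]

/-- If the block matrix `X = [[A,B],[C,D]]` has full column rank, then
for generic `H₁, H₂` (i.e., for all `(H₁,H₂)` in the complement of a proper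
Zariski-closed set, here the non-vanishing locus of a nonzero polynomial in the
entries of `H₁` and `H₂`),
`rank [[H₁A, H₁B],[H₂C, H₂D]] ≥ rank [[H₁A, 0],[0, H₂D]]`. -/
theorem stmt_0 (m₁ m₂ n₁ n₂ k₁ k₂ : ℕ)
    (A : Matrix (Fin m₁) (Fin n₁) ℂ) (B : Matrix (Fin m₁) (Fin n₂) ℂ)
    (C : Matrix (Fin m₂) (Fin n₁) ℂ) (D : Matrix (Fin m₂) (Fin n₂) ℂ)
    (hX : (Matrix.fromBlocks A B C D).rank = n₁ + n₂) :
    ∃ p : MvPolynomial ((Fin k₁ × Fin m₁) ⊕ (Fin k₂ × Fin m₂)) ℂ, p ≠ 0 ∧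
      ∀ (H₁ : Matrix (Fin k₁) (Fin m₁) ℂ) (H₂ : Matrix (Fin k₂) (Fin m₂) ℂ),
        MvPolynomial.eval
          (Sum.elim (fun q => H₁ q.1 q.2) (fun q => H₂ q.1 q.2)) p ≠ 0 →
        (Matrix.fromBlocks (H₁ * A) (H₁ * B) (H₂ * C) (H₂ * D)).rank ≥
          (Matrix.fromBlocks (H₁ * A) 0 0 (H₂ * D)).rank := by
  have hAD : A.rank + D.rank ≤ n₁ + n₂ := add_le_add A.rank_le_width D.rank_le_width
  exact stmt_0_general A B C D (by lia)
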